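/- Let m_0 ∈ (0,1/2) be a point at which f_0 attains its minimum over (0,1/2). Suppose t ∈ (m_0,1/2), t ≠ 1/3, and β = f_0(t). Then the determinant of the Hessian of F_β is strictly negative at each of the three points (t,t), (1−2t,t), (t,1−2t); in particular each of these critical points is a saddle point of F_β. -/

import Mathlib

/-!
Write `x₀ = 1 - x₁ - x₂`. Since `|ψ|² = (3/2) Σ xᵢ² - 1/2`, the Hessian form of `F_β` at an interior
point of the simplex is `Σ aᵢ wᵢ²` with `w₀ = -(w₁ + w₂)` and `aᵢ = 1/(β xᵢ) - 3/2`, so its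
determinant is the symmetric function `a₀a₁ + a₀a₂ + a₁a₂`. All three points of the theorem have the
coordinates `{t, t, 1 - 2t}` up to order, hence share one determinant. With
`L = log((1 - 2t)/t)` and `β = 2L/(3(1 - 3t))` it equals
`-(27/(4L²)) * ((1 - 3t)/t - L) * h(t)`, where `h(t) = L - (1 - 3t)/(3t(1 - 2t))`.

The factor `(1 - 3t)/t - L` is positive because `log u < u - 1` for `u ≠ 1`. The function `h` has the
sign of `f₀'` away from `1/3`, and
`h'(t) = (1 - 3t)(1 - 4t)/(3t²(1 - 2t)²)`. Thus `h` increases on `(0, 1/4]`, decreases on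
`[1/4, 1/3]` to `h(1/3) = 0`, and increases afterwards. As `f₀(1/4) = (8/3) log 2 < 2 = f₀(1/3)`, the
minimizer `m₀` is not `1/3`, so `h(m₀) = 0`, which forces `m₀ < 1/4`; therefore `h > 0` on
`(m₀, 1/2) \ {1/3}`.

A negative determinant yields directions of strictly negative and strictly positive second
derivative, and the one-variable second-order necessary condition excludes local minima and maxima.
-/

/-- The spin value `v_k = (cos(2πk/3), sin(2πk/3))`. -/
noncomputable def potV (k : ℕ) : ℝ × ℝ :=
  (Real.cos (2 * Real.pi * k / 3), Real.sin (2 * Real.pi * k / 3))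

/-- `ψ(x) = (2x₁+x₂−1)v₁ + (x₁+2x₂−1)v₂`. -/
noncomputable def potPsi (x : ℝ × ℝ) : ℝ × ℝ :=
  ((2 * x.1 + x.2 - 1) * (potV 1).1 + (x.1 + 2 * x.2 - 1) * (potV 2).1,
   (2 * x.1 + x.2 - 1) * (potV 1).2 + (x.1 + 2 * x.2 - 1) * (potV 2).2)

/-- The entropy `S(x) = Σᵢ xᵢ log(3xᵢ)` with `x₀ = 1 − x₁ − x₂`
(the convention `t log t = 0` at `t = 0` holds since `Real.log 0 = 0`). -/
noncomputable def potS (x : ℝ × ℝ) : ℝ :=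
  (1 - x.1 - x.2) * Real.log (3 * (1 - x.1 - x.2))
    + x.1 * Real.log (3 * x.1) + x.2 * Real.log (3 * x.2)

/-- The mean-field Potts potential `F_β(x) = −(1/2)|ψ(x)|² + (1/β)S(x)`. -/
noncomputable def potF (β : ℝ) (x : ℝ × ℝ) : ℝ :=
  - (1 / 2) * ((potPsi x).1 ^ 2 + (potPsi x).2 ^ 2) + (1 / β) * potS x

/-- The open two-dimensional simplex `Ξ°`. -/
def simplexInt : Set (ℝ × ℝ) := {x | 0 < x.1 ∧ 0 < x.2 ∧ x.1 + x.2 < 1}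

/-- The canonical basis of `ℝ × ℝ`. -/
noncomputable def eBasis : Fin 2 → ℝ × ℝ := ![(1, 0), (0, 1)]

/-- The Hessian matrix of a function `f : ℝ × ℝ → ℝ` at a point `x`. -/
noncomputable def hessian (f : ℝ × ℝ → ℝ) (x : ℝ × ℝ) : Matrix (Fin 2) (Fin 2) ℝ :=
  Matrix.of fun i j => fderiv ℝ (fun y => fderiv ℝ f y (eBasis j)) x (eBasis i)

/-- `f₀(t) = (2/(3(1−3t))) log((1−2t)/t)` for `t ≠ 1/3`, with `f₀(1/3) = 2`. -/
noncomputable def f0 (t : ℝ) : ℝ :=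
  if t = 1 / 3 then 2 else 2 / (3 * (1 - 3 * t)) * Real.log ((1 - 2 * t) / t)

open Filter Topology

/-! ### The function `f0` and its minimizer -/

/-- The function `h` with `f0' = 2 h / (1 - 3t)²` away from `1/3`. -/
noncomputable def potH (t : ℝ) : ℝ :=
  Real.log ((1 - 2 * t) / t) - (1 - 3 * t) / (3 * (t * (1 - 2 * t)))

lemma hasDerivAt_logit {t : ℝ} (h0 : 0 < t) (h1 : t < 1 / 2) :
    HasDerivAt (fun t : ℝ => Real.log ((1 - 2 * t) / t)) (-1 / (t * (1 - 2 * t))) t := by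
  have hp : 0 < 1 - 2 * t := by linarith
  have ha : HasDerivAt (fun t : ℝ => 1 - 2 * t) (-2) t := by
    simpa using ((hasDerivAt_id' t).const_mul 2).const_sub 1
  have := (ha.fun_div (hasDerivAt_id' t) h0.ne').log (div_pos hp h0).ne'
  refine this.congr_deriv ?_
  field_simp
  ring

lemma hasDerivAt_potH {t : ℝ} (h0 : 0 < t) (h1 : t < 1 / 2) :
    HasDerivAt potH ((1 - 3 * t) * (1 - 4 * t) / (3 * t ^ 2 * (1 - 2 * t) ^ 2)) t := by
  have hp : 0 < 1 - 2 * t := by linarith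
  have ha : HasDerivAt (fun t : ℝ => 1 - 2 * t) (-2) t := by
    simpa using ((hasDerivAt_id' t).const_mul 2).const_sub 1
  have hb : HasDerivAt (fun t : ℝ => 1 - 3 * t) (-3) t := by
    simpa using ((hasDerivAt_id' t).const_mul 3).const_sub 1
  have hd := ((hasDerivAt_id' t).fun_mul ha).const_mul 3
  have := (hasDerivAt_logit h0 h1).fun_sub
    (hb.fun_div hd (by simpa using ⟨h0.ne', hp.ne'⟩))
  refine this.congr_deriv ?_
  field_simp
  ring

lemma potH_third : potH (1 / 3) = 0 := by
  norm_num [potH]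

lemma continuousOn_potH {D : Set ℝ} (hD : D ⊆ Set.Ioo 0 (1 / 2)) : ContinuousOn potH D :=
  fun _ hx => (hasDerivAt_potH (hD hx).1 (hD hx).2).continuousAt.continuousWithinAt

lemma potH_strictMonoOn_left : StrictMonoOn potH (Set.Ioc 0 (1 / 4)) := by
  refine strictMonoOn_of_deriv_pos (convex_Ioc _ _)
    (continuousOn_potH fun x hx => ⟨hx.1, by linarith [hx.2]⟩) fun x hx => ?_
  rw [interior_Ioc] at hx
  obtain ⟨h0, h1⟩ := hx
  rw [(hasDerivAt_potH h0 (by linarith)).deriv]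
  have : 0 < 1 - 2 * x := by linarith
  have : 0 < 1 - 3 * x := by linarith
  have : 0 < 1 - 4 * x := by linarith
  positivity

lemma potH_pos_middle {t : ℝ} (h0 : 1 / 4 ≤ t) (h1 : t < 1 / 3) : 0 < potH t := by
  have hanti : StrictAntiOn potH (Set.Icc (1 / 4) (1 / 3)) := by
    refine strictAntiOn_of_deriv_neg (convex_Icc _ _)
      (continuousOn_potH fun x hx => ⟨by linarith [hx.1], by linarith [hx.2]⟩) fun x hx => ?_
    rw [interior_Icc] at hx
    obtain ⟨h0, h1⟩ := hx
    have hx0 : 0 < x := by linarith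
    rw [(hasDerivAt_potH hx0 (by linarith)).deriv]
    have : 0 < 1 - 2 * x := by linarith
    exact div_neg_of_neg_of_pos (by nlinarith) (by positivity)
  have := hanti ⟨h0, h1.le⟩ ⟨by norm_num, le_rfl⟩ h1
  rwa [potH_third] at this

lemma potH_pos_right {t : ℝ} (h0 : 1 / 3 < t) (h1 : t < 1 / 2) : 0 < potH t := by
  have hmono : StrictMonoOn potH (Set.Ico (1 / 3) (1 / 2)) := by
    refine strictMonoOn_of_deriv_pos (convex_Ico _ _)
      (continuousOn_potH fun x hx => ⟨by linarith [hx.1], by linarith [hx.2]⟩) fun x hx => ?_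
    rw [interior_Ico] at hx
    obtain ⟨h0, h1⟩ := hx
    have hx0 : 0 < x := by linarith
    rw [(hasDerivAt_potH hx0 (by linarith)).deriv]
    have : 0 < 1 - 2 * x := by linarith
    exact div_pos (by nlinarith) (by positivity)
  have := hmono ⟨le_rfl, by norm_num⟩ ⟨h0.le, h1⟩ h0
  rwa [potH_third] at this

lemma potH_minimizer {m : ℝ} (hm : m ∈ Set.Ioo (0 : ℝ) (1 / 2))
    (hmin : ∀ s ∈ Set.Ioo (0 : ℝ) (1 / 2), f0 m ≤ f0 s) (hm3 : m ≠ 1 / 3) : potH m = 0 := by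
  have hloc : IsLocalMin f0 m := by
    filter_upwards [isOpen_Ioo.mem_nhds hm] with s hs using hmin s hs
  have hd0 : 1 - 3 * m ≠ 0 := fun h => hm3 (by linarith)
  have hp : 0 < 1 - 2 * m := by linarith [hm.2]
  have hm0 := hm.1
  have hb : HasDerivAt (fun t : ℝ => 3 * (1 - 3 * t)) (-9) m := by
    have := (((hasDerivAt_id' m).const_mul 3).const_sub 1).const_mul 3
    refine this.congr_deriv ?_
    norm_num
  have hder := ((hasDerivAt_const m (2 : ℝ)).fun_div hb (by simpa using hd0)).fun_mul
    (hasDerivAt_logit hm.1 hm.2)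
  have heq : f0 =ᶠ[𝓝 m]
      fun t => 2 / (3 * (1 - 3 * t)) * Real.log ((1 - 2 * t) / t) := by
    filter_upwards [isOpen_ne.mem_nhds hm3] with s hs
    simp only [f0, if_neg hs]
  have hz := hloc.hasDerivAt_eq_zero (HasDerivAt.congr_of_eventuallyEq hder heq)
  unfold potH
  generalize Real.log ((1 - 2 * m) / m) = L at hz ⊢
  field_simp at hz ⊢
  linear_combination hz / 6

lemma potH_pos {m t : ℝ} (hm : m ∈ Set.Ioo (0 : ℝ) (1 / 2))
    (hmin : ∀ s ∈ Set.Ioo (0 : ℝ) (1 / 2), f0 m ≤ f0 s)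
    (ht : t ∈ Set.Ioo m (1 / 2)) (ht3 : t ≠ 1 / 3) : 0 < potH t := by
  have hm3 : m ≠ 1 / 3 := by
    rintro rfl
    have h := hmin (1 / 4) ⟨by norm_num, by norm_num⟩
    norm_num [f0] at h
    linarith [Real.log_two_lt_d9]
  have hz := potH_minimizer hm hmin hm3
  have hm4 : m < 1 / 4 := by
    by_contra! h4
    rcases lt_or_gt_of_ne hm3 with h | h
    · exact (potH_pos_middle h4 h).ne' hz
    · exact (potH_pos_right h hm.2).ne' hz
  rcases lt_or_gt_of_ne ht3 with h | h
  · rcases le_or_gt (1 / 4) t with h4 | h4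
    · exact potH_pos_middle h4 h
    · rw [← hz]
      exact potH_strictMonoOn_left ⟨hm.1, hm4.le⟩ ⟨hm.1.trans ht.1, h4.le⟩ ht.1
  · exact potH_pos_right h ht.2

/-- The value of the Hessian determinant at a permutation of `(t, t, 1 - 2t)` is negative. -/
lemma det_expr_neg {m t β : ℝ} (hm : m ∈ Set.Ioo (0 : ℝ) (1 / 2))
    (hmin : ∀ s ∈ Set.Ioo (0 : ℝ) (1 / 2), f0 m ≤ f0 s)
    (ht : t ∈ Set.Ioo m (1 / 2)) (ht3 : t ≠ 1 / 3) (hβ : β = f0 t) :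
    (1 / β / t - 3 / 2) * ((1 / β / t - 3 / 2) + 2 * (1 / β / (1 - 2 * t) - 3 / 2)) < 0 := by
  have hH := potH_pos hm hmin ht ht3
  have h0 : 0 < t := hm.1.trans ht.1
  have hp : 0 < 1 - 2 * t := by linarith [ht.2]
  have hd : 1 - 3 * t ≠ 0 := fun h => ht3 (by linarith)
  have hu1 : (1 - 2 * t) / t ≠ 1 := by
    intro h
    rw [div_eq_one_iff_eq h0.ne'] at h
    exact hd (by linarith)
  have hu0 : 0 < (1 - 2 * t) / t := div_pos hp h0
  have hlog := Real.log_lt_sub_one_of_pos hu0 hu1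
  have hL : Real.log ((1 - 2 * t) / t) ≠ 0 := Real.log_ne_zero_of_pos_of_ne_one hu0 hu1
  rw [f0, if_neg ht3] at hβ
  unfold potH at hH
  subst hβ
  generalize Real.log ((1 - 2 * t) / t) = L at *
  have key : (1 / (2 / (3 * (1 - 3 * t)) * L) / t - 3 / 2) *
      ((1 / (2 / (3 * (1 - 3 * t)) * L) / t - 3 / 2)
        + 2 * (1 / (2 / (3 * (1 - 3 * t)) * L) / (1 - 2 * t) - 3 / 2))
      = -(27 / (4 * L ^ 2) * (((1 - 2 * t) / t - 1 - L)
        * (L - (1 - 3 * t) / (3 * (t * (1 - 2 * t)))))) := by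
    field_simp
    ring
  rw [key, neg_lt_zero]
  have : 0 < (1 - 2 * t) / t - 1 - L := by linarith
  positivity

/-! ### Derivatives of the potential -/

lemma potF_eq (β : ℝ) (x : ℝ × ℝ) :
    potF β x = -(3 / 4) * ((1 - x.1 - x.2) ^ 2 + x.1 ^ 2 + x.2 ^ 2) + 1 / 4
      + (1 / β) * potS x := by
  have e1 : 2 * Real.pi * (1 : ℕ) / 3 = Real.pi - Real.pi / 3 := by push_cast; ring
  have e2 : 2 * Real.pi * (2 : ℕ) / 3 = Real.pi / 3 + Real.pi := by push_cast; ring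
  have h3 : √(3 : ℝ) ^ 2 = 3 := Real.sq_sqrt (by norm_num)
  simp only [potF, potPsi, potV, e1, e2, Real.cos_pi_sub, Real.sin_pi_sub, Real.cos_add_pi,
    Real.sin_add_pi, Real.cos_pi_div_three, Real.sin_pi_div_three]
  linear_combination (-(1 / 8) * (x.1 - x.2) ^ 2) * h3

/-- The partial derivative of `potF` in the coordinate with value `a`, where `c = 1 / β` and `x0` is the dependent
coordinate `1 - x₁ - x₂`. -/
noncomputable def potP (c a x0 : ℝ) : ℝ :=
  -(3 / 2) * (a - x0) + c * (Real.log (3 * a) - Real.log (3 * x0))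

lemma hasFDerivAt_potF (β : ℝ) {x : ℝ × ℝ} (hx : x ∈ simplexInt) :
    HasFDerivAt (potF β)
      (potP (1 / β) x.1 (1 - x.1 - x.2) • ContinuousLinearMap.fst ℝ ℝ ℝ
        + potP (1 / β) x.2 (1 - x.1 - x.2) • ContinuousLinearMap.snd ℝ ℝ ℝ) x := by
  obtain ⟨h1, h2, h3⟩ := hx
  have h0 : 0 < 1 - x.1 - x.2 := by linarith
  have d1 : HasFDerivAt (fun x : ℝ × ℝ => x.1) (ContinuousLinearMap.fst ℝ ℝ ℝ) x := hasFDerivAt_fst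
  have d2 : HasFDerivAt (fun x : ℝ × ℝ => x.2) (ContinuousLinearMap.snd ℝ ℝ ℝ) x := hasFDerivAt_snd
  have d0 := (d1.const_sub 1).fun_sub d2
  have l1 := d1.mul ((d1.const_mul 3).log (by positivity))
  have l2 := d2.mul ((d2.const_mul 3).log (by positivity))
  have l0 := d0.mul ((d0.const_mul 3).log (by simpa using h0.ne'))
  have := (((((d0.pow 2).add (d1.pow 2)).add (d2.pow 2)).const_mul (-(3 / 4))).add_const
    (1 / 4)).add (((l0.add l1).add l2).const_mul (1 / β))
  have hf : potF β = _ := funext (potF_eq β)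
  rw [hf]
  refine this.congr_fderiv ?_
  ext <;> simp [potP] <;> field_simp <;> ring

lemma hasFDerivAt_potP_fst (c : ℝ) {x : ℝ × ℝ} (hx : x ∈ simplexInt) :
    HasFDerivAt (fun x : ℝ × ℝ => potP c x.1 (1 - x.1 - x.2))
      (((c / x.1 - 3 / 2) + (c / (1 - x.1 - x.2) - 3 / 2)) • ContinuousLinearMap.fst ℝ ℝ ℝ
        + (c / (1 - x.1 - x.2) - 3 / 2) • ContinuousLinearMap.snd ℝ ℝ ℝ) x := by
  obtain ⟨h1, h2, h3⟩ := hx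
  have h0 : 0 < 1 - x.1 - x.2 := by linarith
  have d1 : HasFDerivAt (fun x : ℝ × ℝ => x.1) (ContinuousLinearMap.fst ℝ ℝ ℝ) x := hasFDerivAt_fst
  have d2 : HasFDerivAt (fun x : ℝ × ℝ => x.2) (ContinuousLinearMap.snd ℝ ℝ ℝ) x := hasFDerivAt_snd
  have d0 := (d1.const_sub 1).fun_sub d2
  have := ((d1.sub d0).const_mul (-(3 / 2))).add
    ((((d1.const_mul 3).log (by positivity)).sub
      ((d0.const_mul 3).log (by simpa using h0.ne'))).const_mul c)
  refine this.congr_fderiv ?_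
  ext <;> simp <;> field_simp <;> ring

lemma hasFDerivAt_potP_snd (c : ℝ) {x : ℝ × ℝ} (hx : x ∈ simplexInt) :
    HasFDerivAt (fun x : ℝ × ℝ => potP c x.2 (1 - x.1 - x.2))
      ((c / (1 - x.1 - x.2) - 3 / 2) • ContinuousLinearMap.fst ℝ ℝ ℝ
        + ((c / x.2 - 3 / 2) + (c / (1 - x.1 - x.2) - 3 / 2)) •
          ContinuousLinearMap.snd ℝ ℝ ℝ) x := by
  obtain ⟨h1, h2, h3⟩ := hx
  have h0 : 0 < 1 - x.1 - x.2 := by linarith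
  have d1 : HasFDerivAt (fun x : ℝ × ℝ => x.1) (ContinuousLinearMap.fst ℝ ℝ ℝ) x := hasFDerivAt_fst
  have d2 : HasFDerivAt (fun x : ℝ × ℝ => x.2) (ContinuousLinearMap.snd ℝ ℝ ℝ) x := hasFDerivAt_snd
  have d0 := (d1.const_sub 1).fun_sub d2
  have := ((d2.sub d0).const_mul (-(3 / 2))).add
    ((((d2.const_mul 3).log (by positivity)).sub
      ((d0.const_mul 3).log (by simpa using h0.ne'))).const_mul c)
  refine this.congr_fderiv ?_
  ext <;> simp <;> field_simp <;> ring

lemma simplexInt_mem_nhds {x : ℝ × ℝ} (hx : x ∈ simplexInt) : simplexInt ∈ 𝓝 x := by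
  have : IsOpen simplexInt := by
    have h1 : IsOpen {x : ℝ × ℝ | 0 < x.1} := isOpen_lt continuous_const continuous_fst
    have h2 : IsOpen {x : ℝ × ℝ | 0 < x.2} := isOpen_lt continuous_const continuous_snd
    have h3 : IsOpen {x : ℝ × ℝ | x.1 + x.2 < 1} :=
      isOpen_lt (continuous_fst.add continuous_snd) continuous_const
    exact h1.inter (h2.inter h3)
  exact this.mem_nhds hx

lemma hessian_potF (β : ℝ) {x : ℝ × ℝ} (hx : x ∈ simplexInt) :
    hessian (potF β) x =
      !![(1 / β / x.1 - 3 / 2) + (1 / β / (1 - x.1 - x.2) - 3 / 2),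
          1 / β / (1 - x.1 - x.2) - 3 / 2;
        1 / β / (1 - x.1 - x.2) - 3 / 2,
          (1 / β / x.2 - 3 / 2) + (1 / β / (1 - x.1 - x.2) - 3 / 2)] := by
  have e0 : (fun y => fderiv ℝ (potF β) y (eBasis 0)) =ᶠ[𝓝 x]
      fun y => potP (1 / β) y.1 (1 - y.1 - y.2) := by
    filter_upwards [simplexInt_mem_nhds hx] with y hy
    rw [(hasFDerivAt_potF β hy).fderiv]
    simp [eBasis]
  have e1 : (fun y => fderiv ℝ (potF β) y (eBasis 1)) =ᶠ[𝓝 x]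
      fun y => potP (1 / β) y.2 (1 - y.1 - y.2) := by
    filter_upwards [simplexInt_mem_nhds hx] with y hy
    rw [(hasFDerivAt_potF β hy).fderiv]
    simp [eBasis]
  have g0 := e0.fderiv_eq.trans (hasFDerivAt_potP_fst (1 / β) hx).fderiv
  have g1 := e1.fderiv_eq.trans (hasFDerivAt_potP_snd (1 / β) hx).fderiv
  ext i j
  fin_cases i <;> fin_cases j <;> simp [hessian, g0, g1] <;> simp [eBasis]

/-! ### Second-order conditions -/

/-- The second-order necessary condition for a local minimum in one variable. -/
lemma not_isLocalMin_of_second_deriv_neg {φ φ' : ℝ → ℝ} {d s : ℝ}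
    (h1 : ∀ᶠ u in 𝓝 s, HasDerivAt φ (φ' u) u) (h2 : HasDerivAt φ' d s) (hd : d < 0) :
    ¬ IsLocalMin φ s := by
  intro hmin
  have hde : deriv φ =ᶠ[𝓝 s] φ' := h1.mono fun u hu => hu.deriv
  have hdd : deriv (deriv φ) s = d := hde.deriv_eq.trans h2.deriv
  have hmax : IsLocalMax φ s :=
    isLocalMax_of_deriv_deriv_neg (hdd ▸ hd) hmin.deriv_eq_zero
      h1.self_of_nhds.continuousAt
  -- A point that is both a local minimum and a local maximum has a neighbourhood where `φ` is
  -- constant, so the second derivative vanishes there.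
  have hconst : φ =ᶠ[𝓝 s] fun _ => φ s := by
    filter_upwards [hmin, hmax] with u hu hv using le_antisymm hv hu
  have hz : deriv φ =ᶠ[𝓝 s] fun _ => (0 : ℝ) := by
    simpa using hconst.deriv
  have := hz.deriv_eq
  rw [hdd] at this
  simp at this
  exact hd.ne this

lemma exists_quadratic_neg {A B C : ℝ} (h : A * C - B * B < 0) :
    ∃ v w : ℝ, A * v ^ 2 + 2 * B * v * w + C * w ^ 2 < 0 := by
  rcases lt_trichotomy A 0 with hA | hA | hA
  · exact ⟨1, 0, by simpa using hA⟩
  · subst hA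
    have hB : B ≠ 0 := by rintro rfl; simp at h
    refine ⟨-(C + 1) / (2 * B), 1, ?_⟩
    have : 2 * B * (-(C + 1) / (2 * B)) = -(C + 1) := by field_simp
    rw [this]
    norm_num
  · exact ⟨-B, A, by nlinarith [mul_neg_of_pos_of_neg hA h]⟩

/-- Restricting `potF β` to the line through `x` in direction `(v, w)`: the first derivative near
`0` and the second derivative at `0`. -/
lemma potF_line (β : ℝ) {x : ℝ × ℝ} (hx : x ∈ simplexInt) (v w : ℝ) :
    ∃ φ' : ℝ → ℝ,
      (∀ᶠ s in 𝓝 (0 : ℝ), HasDerivAt (fun s : ℝ => potF β (x + s • (v, w))) (φ' s) s) ∧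
      HasDerivAt φ'
        (((1 / β / x.1 - 3 / 2) + (1 / β / (1 - x.1 - x.2) - 3 / 2)) * v ^ 2
          + 2 * (1 / β / (1 - x.1 - x.2) - 3 / 2) * v * w
          + ((1 / β / x.2 - 3 / 2) + (1 / β / (1 - x.1 - x.2) - 3 / 2)) * w ^ 2) 0 := by
  have hl : ∀ s : ℝ, HasDerivAt (fun s : ℝ => x + s • ((v, w) : ℝ × ℝ)) (v, w) s := fun s => by
    simpa using ((hasDerivAt_id s).smul_const ((v, w) : ℝ × ℝ)).const_add x
  refine ⟨fun s => v * potP (1 / β) (x + s • ((v, w) : ℝ × ℝ)).1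
      (1 - (x + s • ((v, w) : ℝ × ℝ)).1 - (x + s • ((v, w) : ℝ × ℝ)).2)
    + w * potP (1 / β) (x + s • ((v, w) : ℝ × ℝ)).2
      (1 - (x + s • ((v, w) : ℝ × ℝ)).1 - (x + s • ((v, w) : ℝ × ℝ)).2), ?_, ?_⟩
  · have hev : ∀ᶠ s in 𝓝 (0 : ℝ), x + s • ((v, w) : ℝ × ℝ) ∈ simplexInt :=
      (hl 0).continuousAt.eventually_mem (by simpa using simplexInt_mem_nhds hx)
    filter_upwards [hev] with s hs
    have := (hasFDerivAt_potF β hs).comp_hasDerivAt s (hl s)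
    refine this.congr_deriv ?_
    simp
    ring
  · have hx0 : x = x + (0 : ℝ) • ((v, w) : ℝ × ℝ) := by simp
    have a1 := (hasFDerivAt_potP_fst (1 / β) hx).comp_hasDerivAt_of_eq (0 : ℝ) (hl 0) hx0
    have a2 := (hasFDerivAt_potP_snd (1 / β) hx).comp_hasDerivAt_of_eq (0 : ℝ) (hl 0) hx0
    refine ((a1.const_mul v).add (a2.const_mul w)).congr_deriv ?_
    simp
    ring

lemma saddle_of_det_neg (β : ℝ) {x : ℝ × ℝ} (hx : x ∈ simplexInt)
    (hdet : (hessian (potF β) x).det < 0) :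
    ¬ IsLocalMin (potF β) x ∧ ¬ IsLocalMax (potF β) x := by
  rw [hessian_potF β hx, Matrix.det_fin_two_of] at hdet
  have hcont : ∀ v w : ℝ, Tendsto (fun s : ℝ => x + s • ((v, w) : ℝ × ℝ)) (𝓝 0) (𝓝 x) := by
    intro v w
    have : Continuous (fun s : ℝ => x + s • ((v, w) : ℝ × ℝ)) := by fun_prop
    simpa using this.tendsto 0
  constructor
  · intro hmin
    obtain ⟨v, w, hq⟩ := exists_quadratic_neg hdet
    obtain ⟨φ', h1, h2⟩ := potF_line β hx v w
    refine not_isLocalMin_of_second_deriv_neg h1 h2 hq ?_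
    filter_upwards [(hcont v w).eventually hmin] with s hs
    simpa using hs
  · intro hmax
    obtain ⟨v, w, hq⟩ := exists_quadratic_neg
      (A := -((1 / β / x.1 - 3 / 2) + (1 / β / (1 - x.1 - x.2) - 3 / 2)))
      (B := -(1 / β / (1 - x.1 - x.2) - 3 / 2))
      (C := -((1 / β / x.2 - 3 / 2) + (1 / β / (1 - x.1 - x.2) - 3 / 2))) (by linarith)
    obtain ⟨φ', h1, h2⟩ := potF_line β hx v w
    refine not_isLocalMin_of_second_deriv_neg (h1.mono fun s hs => hs.neg) h2.neg
      (by linarith) ?_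
    filter_upwards [(hcont v w).eventually hmax] with s hs
    simp only [Pi.neg_apply, zero_smul, add_zero]
    exact neg_le_neg hs

/-- if `m₀` minimizes `f₀` on `(0,1/2)`, `t ∈ (m₀,1/2)`, `t ≠ 1/3` and
`β = f₀(t)`, then the Hessian of `F_β` has strictly negative determinant at each of the
points `(t,t)`, `(1−2t,t)`, `(t,1−2t)`; in particular each is a saddle point. -/
theorem potts_saddle_points (m0 t β : ℝ)
    (hm : m0 ∈ Set.Ioo (0 : ℝ) (1 / 2))
    (hmin : ∀ s ∈ Set.Ioo (0 : ℝ) (1 / 2), f0 m0 ≤ f0 s)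
    (ht : t ∈ Set.Ioo m0 (1 / 2)) (ht3 : t ≠ 1 / 3) (hβ : β = f0 t) :
    ∀ p ∈ ({(t, t), (1 - 2 * t, t), (t, 1 - 2 * t)} : Set (ℝ × ℝ)),
      (hessian (potF β) p).det < 0 ∧ ¬ IsLocalMin (potF β) p ∧ ¬ IsLocalMax (potF β) p := by
  have hneg := det_expr_neg hm hmin ht ht3 hβ
  have h0 : 0 < t := hm.1.trans ht.1
  have h1 : t < 1 / 2 := ht.2
  intro p hp
  suffices h : p ∈ simplexInt ∧ (hessian (potF β) p).det < 0 from
    ⟨h.2, saddle_of_det_neg β h.1 h.2⟩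
  simp only [Set.mem_insert_iff, Set.mem_singleton_iff] at hp
  rcases hp with rfl | rfl | rfl
  · have hs : ((t, t) : ℝ × ℝ) ∈ simplexInt := ⟨h0, h0, by simp only; linarith⟩
    refine ⟨hs, ?_⟩
    rw [hessian_potF β hs, Matrix.det_fin_two_of]
    simp only
    rw [show 1 - t - t = 1 - 2 * t by ring]
    linarith
  · have hs : ((1 - 2 * t, t) : ℝ × ℝ) ∈ simplexInt :=
      ⟨by simp only; linarith, h0, by simp only; linarith⟩
    refine ⟨hs, ?_⟩
    rw [hessian_potF β hs, Matrix.det_fin_two_of]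
    simp only
    rw [show 1 - (1 - 2 * t) - t = t by ring]
    linarith
  · have hs : ((t, 1 - 2 * t) : ℝ × ℝ) ∈ simplexInt :=
      ⟨h0, by simp only; linarith, by simp only; linarith⟩
    refine ⟨hs, ?_⟩
    rw [hessian_potF β hs, Matrix.det_fin_two_of]
    simp only
    rw [show 1 - t - (1 - 2 * t) = t by ring]
    linarith
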